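/- arXiv:2602.22838 — 3 statements merged into one kernel-verified Lean document; each statement's English description precedes it below -/
import Mathlib

section
/- Assume n−2 is divisible by m−1. Then for every integer k with 0 ≤ k < (m−2)(n−2)/(m−1) + 1, the Maximin social choice correspondence is not k-augmentation strategyproof: there exist a profile with n voters, a voter i, a manipulation, and a tie-breaker under which the manipulation yields a strictly better outcome for voter i than adding k truthful copies of her vote. Consequently Φ(Maximin) ≥ (m−2)(n−2)/(m−1) + 1. -/
open Finset

/-- A strict linear preference order over `m` candidates, encoded as the permutation sending
each candidate to its rank; rank `0` is the most preferred position, so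
`c ≻ c'` iff `p c < p c'`. -/
abbrev Pref (m : ℕ) := Equiv.Perm (Fin m)

/-- A profile of `N` voters, each with a strict preference over `m` candidates. -/
abbrev Profile (m N : ℕ) := Fin N → Pref m

/-- A social choice correspondence: for each number `N` of voters, it maps each `N`-voter
profile to a set of (tied) winners. -/
abbrev SCC (m : ℕ) := (N : ℕ) → Profile m N → Finset (Fin m)

/-- The profile `P` with `k` extra copies of voter `i`'s preference appended. -/
def addCopies {m n : ℕ} (P : Profile m n) (i : Fin n) (k : ℕ) : Profile m (n + k) :=
  fun j => if h : (j : ℕ) < n then P ⟨j, h⟩ else P i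

/-- Break a tie among the candidates in `A` using the linear tie-breaking order `τ`:
the winner is the `τ`-maximal (lowest `τ`-rank) element of `A`. -/
noncomputable def tiebreak {m : ℕ} [NeZero m] (τ : Pref m) (A : Finset (Fin m)) : Fin m :=
  if h : A.Nonempty then τ.symm ((A.image (fun c => τ c)).min' (h.image _)) else 0

/-- `F` is `k`-augmentation strategyproof on `n`-voter profiles: for every tie-breaker `τ`,
profile `P`, voter `i`, and alternative preference `q`, voter `i` weakly prefers the outcome
obtained by adding `k` truthful copies of her vote to the outcome of the manipulation `q`. -/
def kASP (m n : ℕ) [NeZero m] (F : SCC m) (k : ℕ) : Prop :=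
  ∀ (τ : Pref m) (P : Profile m n) (i : Fin n) (q : Pref m),
    (P i) (tiebreak τ (F (n + k) (addCopies P i k))) ≤
      (P i) (tiebreak τ (F n (Function.update P i q)))

/-- The manipulation potential of `F` on `n`-voter profiles: the least `k` such that `F` is
`k'`-augmentation strategyproof for all `k' ≥ k`, and `⊤` (i.e. `∞`) if no such `k` exists. -/
noncomputable def manipPot (m n : ℕ) [NeZero m] (F : SCC m) : ℕ∞ :=
  sInf ((fun k : ℕ => (k : ℕ∞)) '' {k : ℕ | ∀ k' : ℕ, k ≤ k' → kASP m n F k'})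

/-- The margin of `c` against `d`: the number of voters preferring `c` to `d` minus the
number of voters preferring `d` to `c`. -/
def margin {m N : ℕ} (P : Profile m N) (c d : Fin m) : ℤ :=
  ((Finset.univ.filter (fun i => P i c < P i d)).card : ℤ) -
    ((Finset.univ.filter (fun i => P i d < P i c)).card : ℤ)

/-- Maximin score: the worst margin of `c` against any other candidate. -/
def maximinScore {m N : ℕ} (P : Profile m N) (c : Fin m) : ℤ :=
  if h : (Finset.univ.erase c).Nonempty then
    (Finset.univ.erase c).inf' h (fun d => margin P c d)
  else 0

/-- Maximin: the winners are the candidates with maximal maximin score. -/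
def maximin (m : ℕ) : SCC m := fun _ P =>
  Finset.univ.filter (fun c => ∀ c', maximinScore P c' ≤ maximinScore P c)

/-- sign of the comparison of `c` and `d` under `p` -/
def sg {m : ℕ} (p : Pref m) (c d : Fin m) : ℤ :=
  (if p c < p d then 1 else 0) - (if p d < p c then 1 else 0)

lemma margin_eq {m N : ℕ} (P : Profile m N) (c d : Fin m) :
    margin P c d = ∑ i, sg (P i) c d := by
  simp [margin, sg, Finset.sum_sub_distrib]

lemma sg_swap {m : ℕ} (p : Pref m) (c d : Fin m) : sg p c d = - sg p d c := by
  simp [sg]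

lemma margin_swap {m N : ℕ} (P : Profile m N) (c d : Fin m) :
    margin P c d = - margin P d c := by
  simp [margin]

lemma margin_addCopies {m n : ℕ} (P : Profile m n) (i : Fin n) (k : ℕ) (c d : Fin m) :
    margin (addCopies P i k) c d = margin P c d + k * sg (P i) c d := by
  rw [margin_eq, margin_eq, Fin.sum_univ_add]
  congr 1
  · simp [addCopies]
  · simp [addCopies]

/-- rotation with candidate `s` on top -/
def rot (l s : ℕ) : Pref (l + 3) := Equiv.subRight (Fin.ofNat (l + 3) s)

lemma rot_val (l s : ℕ) (hs : s < l + 3) (c : Fin (l + 3)) :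
    ((rot l s c : Fin (l + 3)) : ℕ) = if s ≤ (c : ℕ) then (c : ℕ) - s else l + 3 + c - s := by
  have hc := c.2
  have e : ((rot l s c : Fin (l + 3)) : ℕ) = (l + 3 - s + c) % (l + 3) := by
    simp [rot, Fin.sub_def, Nat.mod_eq_of_lt hs]
  rw [e]
  split_ifs with h
  · rw [show l + 3 - s + c = (c - s : ℕ) + (l + 3) by omega, Nat.add_mod_right,
      Nat.mod_eq_of_lt (by omega)]
  · rw [Nat.mod_eq_of_lt (by omega)]; omega

lemma sg_rot (l s : ℕ) (hs : s < l + 3) (c d : Fin (l + 3)) (h : (c : ℕ) < d) :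
    sg (rot l s) c d = if (c : ℕ) < s ∧ s ≤ (d : ℕ) then -1 else 1 := by
  have hc := c.2
  have hd := d.2
  simp only [sg, Fin.lt_def, rot_val l s hs]
  split_ifs <;> omega

lemma sum_ind (c d M : ℕ) (h : c < d) (hd : d < M) :
    ∑ s ∈ range M, (if c < s ∧ s ≤ d then (-1 : ℤ) else 1) = M - 2 * ((d : ℤ) - c) := by
  have e : ∀ s : ℕ, (if c < s ∧ s ≤ d then (-1 : ℤ) else 1)
      = 1 - 2 * (if c < s ∧ s ≤ d then 1 else 0) := by
    intro s; split_ifs <;> norm_num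
  simp_rw [e]
  rw [Finset.sum_sub_distrib, ← Finset.mul_sum, Finset.sum_boole]
  have : (range M).filter (fun s => c < s ∧ s ≤ d) = Ioc c d := by
    ext s; simp; omega
  rw [this]
  simp
  omega

/-- index map skipping `1` -/
def skip (r : ℕ) : ℕ := if r = 0 then 0 else r + 1

lemma sum_cycle (l : ℕ) (c d : Fin (l + 3)) (h : (c : ℕ) < d) :
    ∑ r ∈ range (l + 2), sg (rot l (skip r)) c d =
      (l + 3) - 2 * ((d : ℤ) - c) - (if (c : ℕ) = 0 then -1 else 1) := by
  have h1 : ∑ r ∈ range (l + 2), sg (rot l (skip r)) c d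
      = ∑ r ∈ range (l + 2), (if (c : ℕ) < skip r ∧ skip r ≤ (d : ℕ) then (-1 : ℤ) else 1) := by
    apply Finset.sum_congr rfl
    intro r hr
    rw [Finset.mem_range] at hr
    exact sg_rot l _ (by unfold skip; split_ifs <;> omega) c d h
  have h2 := sum_ind c d (l + 3) h d.2
  rw [h1]
  rw [Finset.sum_range_succ', Finset.sum_range_succ'] at h2
  rw [Finset.sum_range_succ']
  simp only [skip, Nat.add_eq_zero_iff, one_ne_zero, and_false, if_false, if_true] at *
  have e : (if (c : ℕ) < 0 + 1 ∧ 0 + 1 ≤ (d : ℕ) then (-1 : ℤ) else 1)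
      = (if (c : ℕ) = 0 then -1 else 1) := by
    split_ifs <;> omega
  rw [e] at h2
  push_cast at h2
  linarith

lemma sum_mod (L q : ℕ) (g : ℕ → ℤ) :
    ∑ j ∈ range (L * q), g (j % L) = q * ∑ r ∈ range L, g r := by
  induction q with
  | zero => simp
  | succ q ih =>
    rw [Nat.mul_succ, Finset.sum_range_add, ih]
    have : ∑ x ∈ range L, g ((L * q + x) % L) = ∑ r ∈ range L, g r := by
      apply Finset.sum_congr rfl
      intro x hx
      rw [Nat.mul_add_mod, Nat.mod_eq_of_lt (Finset.mem_range.1 hx)]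
    rw [this]; push_cast; ring

/-- the profile, with first voter `p` -/
def prof (l q : ℕ) (p : Pref (l + 3)) : Profile (l + 3) ((l + 2) * q + 2) :=
  Fin.cons p (Fin.cons (rot l 0) (fun j : Fin ((l + 2) * q) => rot l (skip ((j : ℕ) % (l + 2)))))

lemma margin_prof (l q : ℕ) (p : Pref (l + 3)) (c d : Fin (l + 3)) (h : (c : ℕ) < d) :
    margin (prof l q p) c d = sg p c d + 1 +
      q * ((l + 3) - 2 * ((d : ℤ) - c) - (if (c : ℕ) = 0 then -1 else 1)) := by
  rw [margin_eq, Fin.sum_univ_succ, Fin.sum_univ_succ]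
  have e : ∑ j : Fin ((l + 2) * q), sg (rot l (skip ((j : ℕ) % (l + 2)))) c d
      = q * ∑ r ∈ range (l + 2), sg (rot l (skip r)) c d := by
    rw [← sum_mod, ← Fin.sum_univ_eq_sum_range
      (fun j => sg (rot l (skip (j % (l + 2)))) c d)]
  rw [sum_cycle l c d h] at e
  have e0 : sg (rot l 0) c d = 1 := by
    rw [sg_rot l 0 (by omega) c d h]; simp
  simp only [prof, Fin.cons_zero, Fin.cons_succ]
  rw [e, e0]; ring

lemma update_prof (l q : ℕ) (p p' : Pref (l + 3)) :
    Function.update (prof l q p) 0 p' = prof l q p' := by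
  simp [prof]

lemma score_le {m N : ℕ} (P : Profile m N) (c d : Fin m) (h : d ≠ c) :
    maximinScore P c ≤ margin P c d := by
  have hd : d ∈ Finset.univ.erase c := by simp [h]
  unfold maximinScore
  rw [dif_pos ⟨d, hd⟩]
  exact Finset.inf'_le _ hd

lemma score_eq {l N : ℕ} (P : Profile (l + 3) N) (c : Fin (l + 3)) :
    ∃ d, d ≠ c ∧ maximinScore P c = margin P c d := by
  have hne : (Finset.univ.erase c).Nonempty := by
    obtain ⟨d, hd⟩ := exists_ne c
    exact ⟨d, by simp [hd]⟩
  obtain ⟨d, hd, he⟩ := Finset.exists_mem_eq_inf' hne (fun d => margin P c d)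
  refine ⟨d, by simpa using hd, ?_⟩
  unfold maximinScore
  rw [dif_pos hne]; exact he

lemma tiebreak_eq {m : ℕ} [NeZero m] (τ : Pref m) (A : Finset (Fin m)) (c : Fin m)
    (hc : c ∈ A) (h : ∀ d ∈ A, τ c ≤ τ d) : tiebreak τ A = c := by
  unfold tiebreak
  rw [dif_pos ⟨c, hc⟩, Equiv.symm_apply_eq]
  apply le_antisymm
  · exact Finset.min'_le _ _ (Finset.mem_image_of_mem _ hc)
  · apply Finset.le_min'
    intro y hy
    obtain ⟨d, hd, rfl⟩ := Finset.mem_image.1 hy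
    exact h d hd

/-- truthful preference `1 > 2 > 0 > 3 > ...` -/
def tru (l : ℕ) : Pref (l + 3) := Equiv.swap 1 2 * Equiv.swap 0 1

/-- tie-breaker `2 > 0 > 1 > 3 > ...` -/
def tau (l : ℕ) : Pref (l + 3) := Equiv.swap 0 1 * Equiv.swap 1 2

lemma val2 (l : ℕ) : ((2 : Fin (l + 3)) : ℕ) = 2 := by
  simp

lemma tru_val (l : ℕ) (c : Fin (l + 3)) : ((tru l c : Fin (l + 3)) : ℕ) =
    if (c : ℕ) = 0 then 2 else if (c : ℕ) = 1 then 0 else if (c : ℕ) = 2 then 1 else (c : ℕ) := by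
  have h2 := val2 l
  simp only [tru, Equiv.Perm.mul_apply, Equiv.swap_apply_def, Fin.ext_iff, apply_ite Fin.val, h2,
    Fin.val_zero, Fin.val_one]
  split_ifs <;> omega

lemma tau_val (l : ℕ) (c : Fin (l + 3)) : ((tau l c : Fin (l + 3)) : ℕ) =
    if (c : ℕ) = 0 then 1 else if (c : ℕ) = 1 then 2 else if (c : ℕ) = 2 then 0 else (c : ℕ) := by
  have h2 := val2 l
  simp only [tau, Equiv.Perm.mul_apply, Equiv.swap_apply_def, Fin.ext_iff, apply_ite Fin.val, h2,
    Fin.val_zero, Fin.val_one]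
  split_ifs <;> first | omega | contradiction

lemma sg_tru (l : ℕ) (c d : Fin (l + 3)) (h : (c : ℕ) < d) : sg (tru l) c d =
    if (c : ℕ) = 0 ∧ (d : ℕ) ≤ 2 then -1 else 1 := by
  simp only [sg, Fin.lt_def, tru_val]
  split_ifs <;> omega

lemma margin_truth (l q k : ℕ) (c d : Fin (l + 3)) (h : (c : ℕ) < d) :
    margin (addCopies (prof l q (tru l)) 0 k) c d =
      (k + 1) * (if (c : ℕ) = 0 ∧ (d : ℕ) ≤ 2 then -1 else 1) + 1 +
      q * ((l + 3) - 2 * ((d : ℤ) - c) - (if (c : ℕ) = 0 then -1 else 1)) := by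
  rw [margin_addCopies, margin_prof l q _ c d h, ← sg_tru l c d h]
  simp only [prof, Fin.cons_zero]
  ring

lemma truth_low (l q k : ℕ) (c : Fin (l + 3)) (hc : 2 ≤ (c : ℕ)) :
    maximinScore (addCopies (prof l q (tru l)) 0 k) c ≤ - (k + 2 + q * l) := by
  have hcl := c.2
  have := score_le (addCopies (prof l q (tru l)) 0 k) c ⟨c - 1, by omega⟩
    (by rw [Ne, Fin.ext_iff]; simp only; omega)
  rw [margin_swap, margin_truth l q k ⟨c - 1, by omega⟩ c (by simp only; omega)] at this
  simp only at this
  rw [if_neg (by omega)] at this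
  rw [Nat.cast_sub (show 1 ≤ (c : ℕ) by omega)] at this
  push_cast at this
  split_ifs at this <;> linarith

lemma truth_one (l q k : ℕ) :
    maximinScore (addCopies (prof l q (tru l)) 0 k) 1 ≤ k - q * (l + 2) := by
  have := score_le (addCopies (prof l q (tru l)) 0 k) 1 0 (by simp)
  rw [margin_swap, margin_truth l q k _ _ (by simp)] at this
  simp at this
  linarith

lemma truth_zero (l q k : ℕ) (hk : k ≤ (l + 1) * q) :
    - ((k : ℤ) + 2 + q * l) < maximinScore (addCopies (prof l q (tru l)) 0 k) 0 ∧
    (k : ℤ) - q * (l + 2) ≤ maximinScore (addCopies (prof l q (tru l)) 0 k) 0 := by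
  obtain ⟨d, hd, he⟩ := score_eq (addCopies (prof l q (tru l)) 0 k) 0
  have hd0 : 0 < (d : ℕ) := by
    rcases Nat.eq_zero_or_pos (d : ℕ) with h | h
    · exact absurd (Fin.ext (by simpa using h)) hd
    · exact h
  have hdl := d.2
  rw [he, margin_truth l q k _ _ (by simpa using hd0)]
  simp only [Fin.val_zero, true_and, if_true]
  have hk' : (k : ℤ) ≤ (l + 1) * q := by exact_mod_cast hk
  have hql : (0 : ℤ) ≤ q * l := by positivity
  have hq : (0 : ℤ) ≤ q := by positivity
  split_ifs with h
  · have : (q : ℤ) * (d : ℕ) ≤ q * 2 := by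
      apply mul_le_mul_of_nonneg_left _ hq
      exact_mod_cast h
    constructor <;> push_cast <;> nlinarith
  · have : (q : ℤ) * (d : ℕ) ≤ q * (l + 2) := by
      apply mul_le_mul_of_nonneg_left _ hq
      have : (d : ℕ) ≤ l + 2 := by omega
      exact_mod_cast this
    constructor <;> push_cast <;> nlinarith

lemma mem_maximin {m N : ℕ} (P : Profile m N) (c : Fin m) :
    c ∈ maximin m N P ↔ ∀ c', maximinScore P c' ≤ maximinScore P c := by
  simp [maximin]

lemma truth_winner (l q k : ℕ) (hk : k ≤ (l + 1) * q) :
    tiebreak (tau l) (maximin (l + 3) _ (addCopies (prof l q (tru l)) 0 k)) = 0 := by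
  obtain ⟨h1, h2⟩ := truth_zero l q k hk
  apply tiebreak_eq
  · rw [mem_maximin]
    intro c
    rcases Nat.lt_or_ge (c : ℕ) 2 with hc | hc
    · rcases Nat.eq_zero_or_pos (c : ℕ) with h | h
      · rw [show c = 0 from Fin.ext (by simpa using h)]
      · rw [show c = 1 from Fin.ext (by simp; omega)]
        exact (truth_one l q k).trans h2
    · exact (truth_low l q k c hc).trans h1.le
  · intro d hd
    rw [mem_maximin] at hd
    have hd2 : (d : ℕ) ≠ 2 := by
      intro h
      have := truth_low l q k d (by omega)
      have := hd 0
      linarith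
    rw [Fin.le_def, tau_val, tau_val]
    simp only [Fin.val_zero, if_true]
    split_ifs <;> omega

lemma manip_margin (l q : ℕ) (c d : Fin (l + 3)) (h : (c : ℕ) < d) :
    margin (prof l q (rot l 2)) c d = (if (c : ℕ) < 2 ∧ 2 ≤ (d : ℕ) then -1 else 1) + 1 +
      q * ((l + 3) - 2 * ((d : ℤ) - c) - (if (c : ℕ) = 0 then -1 else 1)) := by
  rw [margin_prof l q _ c d h, sg_rot l 2 (by omega) c d h]

lemma manip_winner (l q : ℕ) :
    tiebreak (tau l) (maximin (l + 3) _ (prof l q (rot l 2))) = 2 := by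
  have h2 := val2 l
  have hq : (0 : ℤ) ≤ q := by positivity
  have hql : (0 : ℤ) ≤ q * l := by positivity
  apply tiebreak_eq
  · rw [mem_maximin]
    intro c
    have hx : - ((q : ℤ) * l) ≤ maximinScore (prof l q (rot l 2)) 2 := by
      obtain ⟨d, hd, he⟩ := score_eq (prof l q (rot l 2)) 2
      have hdl := d.2
      have hd2 : (d : ℕ) ≠ 2 := fun h => hd (Fin.ext (by omega))
      rw [he]
      rcases Nat.lt_or_ge (d : ℕ) 2 with h | h
      · rw [margin_swap, manip_margin l q _ _ (by omega), h2]
        rw [if_pos (by omega)]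
        split_ifs with h0
        · rw [h0]; push_cast; nlinarith
        · rw [show (d : ℕ) = 1 by omega]; push_cast; nlinarith
      · rw [manip_margin l q _ _ (by omega), h2]
        rw [if_neg (by omega), if_neg (by omega)]
        have : (q : ℤ) * (d : ℕ) ≤ q * (l + 2) := by
          apply mul_le_mul_of_nonneg_left _ hq
          have : (d : ℕ) ≤ l + 2 := by omega
          exact_mod_cast this
        push_cast; nlinarith
    refine le_trans ?_ hx
    have hcl := c.2
    rcases Nat.eq_zero_or_pos (c : ℕ) with h | h
    · have := score_le (prof l q (rot l 2)) c ⟨l + 2, by omega⟩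
        (by rw [Ne, Fin.ext_iff]; simp only; omega)
      rw [manip_margin l q _ _ (by simp; omega)] at this
      simp only at this
      rw [if_pos (by omega), if_pos (by omega), h] at this
      push_cast at this
      linarith
    · have := score_le (prof l q (rot l 2)) c ⟨c - 1, by omega⟩
        (by rw [Ne, Fin.ext_iff]; simp only; omega)
      rw [margin_swap, manip_margin l q ⟨c - 1, by omega⟩ c (by simp only; omega)] at this
      simp only at this
      rw [Nat.cast_sub (show 1 ≤ (c : ℕ) by omega)] at this
      push_cast at this
      split_ifs at this <;> linarith
  · intro d _
    rw [Fin.le_def, tau_val, tau_val]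
    rw [h2]; simp

lemma not_kASP_aux (l q k : ℕ) (hk : k ≤ (l + 1) * q) :
    ¬ kASP (l + 3) ((l + 2) * q + 2) (maximin (l + 3)) k := by
  intro H
  have h2 := val2 l
  have := H (tau l) (prof l q (tru l)) 0 (rot l 2)
  rw [truth_winner l q k hk, update_prof, manip_winner] at this
  simp only [prof, Fin.cons_zero] at this
  rw [Fin.le_def, tru_val, tru_val] at this
  rw [h2] at this; simp at this

/-- If `m − 1` divides `n − 2`, then Maximin is not `k`-augmentation
strategyproof for any `0 ≤ k < (m−2)(n−2)/(m−1) + 1`; consequently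
`Φ(Maximin) ≥ (m−2)(n−2)/(m−1) + 1`. -/
theorem maximin_not_kASP_of_lt (m n : ℕ) [NeZero m] (hm : 3 ≤ m) (hn : 2 ≤ n)
    (hdvd : (m - 1) ∣ (n - 2)) :
    (∀ k : ℕ, k < (m - 2) * ((n - 2) / (m - 1)) + 1 → ¬ kASP m n (maximin m) k) ∧
      (((m - 2) * ((n - 2) / (m - 1)) + 1 : ℕ) : ℕ∞) ≤ manipPot m n (maximin m) := by
  have main : ∀ k : ℕ, k < (m - 2) * ((n - 2) / (m - 1)) + 1 → ¬ kASP m n (maximin m) k := by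
    intro k hk
    obtain ⟨l, rfl⟩ : ∃ l, m = l + 3 := ⟨m - 3, by omega⟩
    obtain ⟨q, hq⟩ := hdvd
    obtain rfl : n = (l + 2) * q + 2 := by
      have : l + 3 - 1 = l + 2 := by omega
      rw [this] at hq; omega
    have e : (l + 3 - 2) * (((l + 2) * q + 2 - 2) / (l + 3 - 1)) = (l + 1) * q := by
      rw [Nat.add_sub_cancel, show l + 3 - 1 = l + 2 by omega, show l + 3 - 2 = l + 1 by omega,
        Nat.mul_div_cancel_left _ (by omega)]
    rw [e] at hk
    exact not_kASP_aux l q k (by omega)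
  refine ⟨main, ?_⟩
  unfold manipPot
  apply le_sInf
  rintro _ ⟨k, hk, rfl⟩
  by_contra hlt
  simp only [not_le, Nat.cast_lt] at hlt
  exact main k hlt (hk k le_rfl)
end

section
/- Let n be odd, and let f be any anonymous biranking-majority-consistent social choice function. Then the manipulation potential of f satisfies Φ(f) ≥ (n−1)/2. In particular, f is not ((n−1)/2 − 1)-augmentation strategyproof. -/
open Finset

/-- A social choice function: for each number `N` of voters, it maps each `N`-voter profile
to a single winning candidate. -/
abbrev SCF (m : ℕ) := (N : ℕ) → Profile m N → Fin m

/-- `f` is `k`-augmentation strategyproof on `n`-voter profiles (SCF version). -/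
def kASPf (m n : ℕ) (f : SCF m) (k : ℕ) : Prop :=
  ∀ (P : Profile m n) (i : Fin n) (q : Pref m),
    (P i) (f (n + k) (addCopies P i k)) ≤ (P i) (f n (Function.update P i q))

/-- The manipulation potential of the SCF `f` on `n`-voter profiles. -/
noncomputable def manipPotF (m n : ℕ) (f : SCF m) : ℕ∞ :=
  sInf ((fun k : ℕ => (k : ℕ∞)) '' {k : ℕ | ∀ k' : ℕ, k ≤ k' → kASPf m n f k'})

/-- One `x`-voter, then `t` voters `y`, then everyone else `z`. -/
def baseP {m : ℕ} (t : ℕ) (x y z : Pref m) : Profile m (2 * t + 1) :=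
  fun j => if (j : ℕ) = 0 then x else if (j : ℕ) ≤ t then y else z

def cycP {m : ℕ} (t : ℕ) (x y z : Pref m) : Profile m (2 * t + 1 + (t - 1)) :=
  fun j => if (j : ℕ) = 0 then x else if (j : ℕ) ≤ t then y else
    if (j : ℕ) ≤ 2 * t then z else x

lemma addCopies_baseP {m : ℕ} (t : ℕ) (x y z : Pref m) :
    addCopies (baseP t x y z) 0 (t - 1) = cycP t x y z := by
  funext j
  unfold addCopies baseP cycP
  have h1 : ((0 : Fin (2 * t + 1)) : ℕ) = 0 := rfl
  by_cases h : (j : ℕ) < 2 * t + 1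
  · have : (j : ℕ) ≤ 2 * t := by omega
    simp [h, this]
  · have h2 : ¬ (j : ℕ) ≤ 2 * t := by omega
    have h3 : ¬ (j : ℕ) ≤ t := by omega
    simp [h, h2, h3]

lemma cycP_rot {m : ℕ} (t : ℕ) (ht : 1 ≤ t) (x y z : Pref m) :
    ∃ σ : Equiv.Perm (Fin (2 * t + 1 + (t - 1))),
      (fun i => cycP t x y z (σ i)) = cycP t y z x := by
  have : NeZero (2 * t + 1 + (t - 1)) := ⟨by omega⟩
  refine ⟨Equiv.addRight (⟨t, by omega⟩ : Fin (2 * t + 1 + (t - 1))), ?_⟩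
  funext j
  have hj := j.2
  have hv : ((j + (⟨t, by omega⟩ : Fin (2 * t + 1 + (t - 1))) : Fin _) : ℕ) =
      if (j : ℕ) < 2 * t then (j : ℕ) + t else (j : ℕ) + t - 3 * t := by
    rw [Fin.val_add]
    have hN : 2 * t + 1 + (t - 1) = 3 * t := by omega
    simp only [hN]
    split_ifs with h
    · exact Nat.mod_eq_of_lt (by omega)
    · rw [Nat.mod_eq_sub_mod (by omega)]
      exact Nat.mod_eq_of_lt (by omega)
  change cycP t x y z (j + (⟨t, by omega⟩ : Fin (2 * t + 1 + (t - 1)))) = _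
  generalize j + (⟨t, by omega⟩ : Fin (2 * t + 1 + (t - 1))) = l at hv
  unfold cycP
  split_ifs at hv ⊢ <;> first | rfl | (exfalso; omega)

lemma key {m : ℕ} [NeZero m] (f : SCF m) (t : ℕ)
    (hbir : ∀ (N : ℕ) (P : Profile m N) (a b : Pref m),
      (∀ i, P i = a ∨ P i = b) →
      (Finset.univ.filter (fun i => P i = b)).card <
        (Finset.univ.filter (fun i => P i = a)).card →
      f N P = a.symm 0)
    (h : kASPf m (2 * t + 1) f (t - 1)) (x y z : Pref m) (hyz : y ≠ z) :
    x (f _ (cycP t x y z)) ≤ x (y.symm 0) := by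
  have h1 := h (baseP t x y z) 0 y
  have hx : baseP t x y z 0 = x := by simp [baseP]
  rw [addCopies_baseP, hx] at h1
  have hu : Function.update (baseP t x y z) 0 y =
      fun j : Fin (2 * t + 1) => if (j : ℕ) ≤ t then y else z := by
    funext j
    by_cases hj : j = 0
    · subst hj; simp
    · have : (j : ℕ) ≠ 0 := fun h => hj (Fin.ext h)
      rw [Function.update_of_ne hj]
      simp only [baseP, if_neg this]
  rw [hu] at h1
  rwa [hbir (2 * t + 1) (fun j => if (j : ℕ) ≤ t then y else z) y z] at h1
  · intro i
    split_ifs <;> simp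
  · have e1 : (Finset.univ.filter (fun i : Fin (2 * t + 1) =>
        (if (i : ℕ) ≤ t then y else z) = z)) = Finset.Ioi ⟨t, by omega⟩ := by
      ext i
      by_cases hi : (i : ℕ) ≤ t <;> simp [hi, hyz, Fin.lt_def] <;> omega
    have e2 : (Finset.univ.filter (fun i : Fin (2 * t + 1) =>
        (if (i : ℕ) ≤ t then y else z) = y)) = Finset.Iic ⟨t, by omega⟩ := by
      ext i
      by_cases hi : (i : ℕ) ≤ t <;> simp [hi, hyz.symm, Fin.le_def]
    rw [e1, e2, Fin.card_Ioi, Fin.card_Iic]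
    dsimp only
    omega

lemma not_kASPf {m : ℕ} [NeZero m] (hm : 3 ≤ m) (f : SCF m) (t : ℕ) (ht : 1 ≤ t)
    (hanon : ∀ (N : ℕ) (σ : Equiv.Perm (Fin N)) (P : Profile m N),
      f N (fun i => P (σ i)) = f N P)
    (hbir : ∀ (N : ℕ) (P : Profile m N) (a b : Pref m),
      (∀ i, P i = a ∨ P i = b) →
      (Finset.univ.filter (fun i => P i = b)).card <
        (Finset.univ.filter (fun i => P i = a)).card →
      f N P = a.symm 0) : ¬ kASPf m (2 * t + 1) f (t - 1) := by
  intro h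
  obtain ⟨b, hb⟩ : ∃ b : Fin m, (b : ℕ) = 1 := ⟨⟨1, by omega⟩, rfl⟩
  obtain ⟨c, hc⟩ : ∃ c : Fin m, (c : ℕ) = 2 := ⟨⟨2, by omega⟩, rfl⟩
  have h0 : ((0 : Fin m) : ℕ) = 0 := by simp
  have hab : (0 : Fin m) ≠ b := fun e => by rw [← e] at hb; omega
  have hac : (0 : Fin m) ≠ c := fun e => by rw [← e] at hc; omega
  have hbc : b ≠ c := fun e => by rw [← e] at hc; omega
  obtain ⟨x, hx⟩ : ∃ x : Pref m, x = 1 := ⟨_, rfl⟩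
  obtain ⟨z, z0, zb, zc⟩ : ∃ z : Pref m, z 0 = b ∧ z b = c ∧ z c = 0 := by
    refine ⟨Equiv.swap 0 b * Equiv.swap b c, ?_, ?_, ?_⟩
    · rw [Equiv.Perm.mul_apply, Equiv.swap_apply_of_ne_of_ne hab hac, Equiv.swap_apply_left]
    · rw [Equiv.Perm.mul_apply, Equiv.swap_apply_left,
        Equiv.swap_apply_of_ne_of_ne hac.symm hbc.symm]
    · rw [Equiv.Perm.mul_apply, Equiv.swap_apply_right, Equiv.swap_apply_right]
  obtain ⟨y, y0, yb, yc⟩ : ∃ y : Pref m, y 0 = c ∧ y b = 0 ∧ y c = b := by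
    refine ⟨z.symm, ?_, ?_, ?_⟩ <;> rw [Equiv.symm_apply_eq] <;> simp [*]
  have hyz : y ≠ z := fun e => by rw [e, z0] at y0; exact hbc y0
  have hzx : z ≠ x := fun e => by rw [e, hx] at z0; exact hab z0
  have hxy : x ≠ y := fun e => by rw [← e, hx] at y0; exact hac y0
  have k1 := key f t hbir h x y z hyz
  have k2 := key f t hbir h y z x hzx
  have k3 := key f t hbir h z x y hxy
  obtain ⟨σ, hσ⟩ := cycP_rot t ht x y z
  obtain ⟨ρ, hρ⟩ := cycP_rot t ht y z x
  rw [← hρ, hanon, ← hσ, hanon] at k3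
  rw [← hσ, hanon] at k2
  generalize f _ (cycP t x y z) = w at k1 k2 k3
  rw [(Equiv.symm_apply_eq y).2 yb.symm] at k1
  rw [(Equiv.symm_apply_eq z).2 zc.symm, yc] at k2
  rw [(Equiv.symm_apply_eq x).2 (by rw [hx]; rfl : (0 : Fin m) = x 0), z0] at k3
  rw [hx] at k1
  simp only [Equiv.Perm.one_apply, Fin.le_def] at k1 k2 k3
  have hw : w = 0 ∨ w = b := by
    rcases Nat.eq_zero_or_pos (w : ℕ) with e | e
    · left; exact Fin.ext (by omega)
    · right; exact Fin.ext (by omega)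
  rcases hw with rfl | rfl
  · rw [y0] at k2; omega
  · rw [zb] at k3; omega

/-- For odd `n`, any anonymous biranking-majority-consistent social
choice function `f` has manipulation potential at least `(n−1)/2`; in particular `f` is
not `((n−1)/2 − 1)`-augmentation strategyproof. -/
theorem birankingMajority_scf_manipPot_ge (m n : ℕ) [NeZero m] (hm : 3 ≤ m) (hn : 2 ≤ n)
    (hodd : Odd n) (f : SCF m)
    -- anonymity: the output is invariant under permuting the voters
    (hanon : ∀ (N : ℕ) (σ : Equiv.Perm (Fin N)) (P : Profile m N),
      f N (fun i => P (σ i)) = f N P)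
    -- biranking-majority-consistency: on a profile with only two rankings, one strictly
    -- more frequent, the winner is the top choice of the more frequent ranking
    (hbir : ∀ (N : ℕ) (P : Profile m N) (a b : Pref m),
      (∀ i, P i = a ∨ P i = b) →
      (Finset.univ.filter (fun i => P i = b)).card <
        (Finset.univ.filter (fun i => P i = a)).card →
      f N P = a.symm 0) :
    (((n - 1) / 2 : ℕ) : ℕ∞) ≤ manipPotF m n f ∧ ¬ kASPf m n f ((n - 1) / 2 - 1) := by
  have hk : ¬ kASPf m n f ((n - 1) / 2 - 1) := by
    obtain ⟨t, rfl⟩ := hodd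
    have e : (2 * t + 1 - 1) / 2 = t := by omega
    rw [e]
    exact not_kASPf hm f t (by omega) hanon hbir
  refine ⟨?_, hk⟩
  refine le_sInf ?_
  rintro _ ⟨k, hkk, rfl⟩
  by_contra hlt
  have hlt' : k < (n - 1) / 2 := by
    have : (k : ℕ∞) < (((n - 1) / 2 : ℕ) : ℕ∞) := not_le.1 hlt
    exact_mod_cast this
  exact hk (hkk _ (by omega))
end

section
/- Assume m ≥ 5. Then for every integer k ≥ 0, Copeland's rule is not k-augmentation group-strategyproof: there exist a profile ≻, a coalition S of voters, alternative preferences ≻'_S for the coalition, and a tie-breaker τ such that every voter in S strictly prefers Copeland_τ(≻'_S, ≻_{−S}) to Copeland_τ(≻ + k(≻_S)), where ≻ + k(≻_S) appends k copies of each coalition member's truthful preference. Consequently the group manipulation potential of Copeland is ∞. -/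
open Finset

/-- Copeland score of `c`: one point per pairwise majority victory, half a point per
pairwise tie. -/
def copelandScore {m N : ℕ} (P : Profile m N) (c : Fin m) : ℚ :=
  (((Finset.univ.erase c).filter (fun d => 0 < margin P c d)).card : ℚ) +
    (((Finset.univ.erase c).filter (fun d => margin P c d = 0)).card : ℚ) / 2

/-- Copeland's rule: the candidates with maximal Copeland score. -/
def copeland (m : ℕ) : SCC m := fun _ P =>
  Finset.univ.filter (fun c => ∀ c', copelandScore P c' ≤ copelandScore P c)

/-- The profile `P` with `k` extra copies of the truthful preference of each member of the
coalition `S` appended. -/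
def addGroupCopies {m n : ℕ} [NeZero n] (P : Profile m n) (S : Finset (Fin n)) (k : ℕ) :
    Profile m (n + k * S.card) :=
  fun j => if h : (j : ℕ) < n then P ⟨j, h⟩
    else P ((S.sort (· ≤ ·)).getD (((j : ℕ) - n) % S.card) 0)

/-- `F` is `k`-augmentation group-strategyproof: for every tie-breaker `τ`, profile (over
any number of voters), nonempty coalition `S`, and joint manipulation `q`, some member of
`S` weakly prefers the outcome obtained by appending `k` truthful copies of each member of
`S` to the outcome of the group manipulation. -/
def kGSP (m : ℕ) [NeZero m] (F : SCC m) (k : ℕ) : Prop :=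
  ∀ (n : ℕ) [NeZero n] (τ : Pref m) (P : Profile m n) (S : Finset (Fin n)),
    S.Nonempty → ∀ q : Fin n → Pref m,
      ∃ i ∈ S,
        (P i) (tiebreak τ (F (n + k * S.card) (addGroupCopies P S k))) ≤
          (P i) (tiebreak τ (F n (fun j => if j ∈ S then q j else P j)))

/-- The group manipulation potential of `F`: the least `k` such that `F` is `k'`-augmentation
group-strategyproof for all `k' ≥ k`, and `⊤` (i.e. `∞`) if no such `k` exists. -/
noncomputable def groupManipPot (m : ℕ) [NeZero m] (F : SCC m) : ℕ∞ :=
  sInf ((fun k : ℕ => (k : ℕ∞)) '' {k : ℕ | ∀ k' : ℕ, k ≤ k' → kGSP m F k'})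


def cpA (m : ℕ) (hm : 5 ≤ m) : Pref m where
  toFun c := ⟨if c.1 = 0 then m - 1 else if c.1 = 1 then 0 else m - c.1, by
    have := c.2; split_ifs <;> omega⟩
  invFun r := ⟨if r.1 = 0 then 1 else if r.1 = m - 1 then 0 else m - r.1, by
    have := r.2; split_ifs <;> omega⟩
  left_inv c := by
    have := c.2
    apply Fin.ext
    dsimp only
    grind
  right_inv c := by
    have := c.2
    apply Fin.ext
    dsimp only
    grind

def cpB (m : ℕ) (hm : 5 ≤ m) : Pref m where
  toFun c := ⟨if c.1 = 0 then m - 2 else if c.1 = 1 then m - 1 else m - 1 - c.1, by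
    have := c.2; split_ifs <;> omega⟩
  invFun r := ⟨if r.1 = m - 2 then 0 else if r.1 = m - 1 then 1 else m - 1 - r.1, by
    have := r.2; split_ifs <;> omega⟩
  left_inv c := by
    have := c.2
    apply Fin.ext
    dsimp only
    grind
  right_inv c := by
    have := c.2
    apply Fin.ext
    dsimp only
    grind

/-- signed comparison -/
def cpS {m : ℕ} (p : Pref m) (c d : Fin m) : ℤ :=
  (if p c < p d then 1 else 0) - (if p d < p c then 1 else 0)

lemma margin_eq_sum {m N : ℕ} (P : Profile m N) (c d : Fin m) :
    margin P c d = ∑ i, cpS (P i) c d := by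
  simp only [cpS, Finset.sum_sub_distrib, Finset.sum_boole]
  rfl

/-- the infinite sequence of voters -/
def cpQ (m : ℕ) (hm : 5 ≤ m) (j : ℕ) : Pref m :=
  if j % 2 = 0 then Equiv.refl _ else if j = 1 then cpA m hm else cpB m hm

lemma margin_cpQ (m : ℕ) (hm : 5 ≤ m) (k : ℕ) (c d : Fin m) :
    margin (fun j : Fin (4 + k * 2) => cpQ m hm j) c d =
      cpS (Equiv.refl _) c d + cpS (cpA m hm) c d
        + (k + 1) * (cpS (Equiv.refl _) c d + cpS (cpB m hm) c d) := by
  rw [margin_eq_sum, Fin.sum_univ_eq_sum_range (fun j => cpS (cpQ m hm j) c d)]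
  induction k with
  | zero => simp [Finset.sum_range_succ, cpQ]; ring
  | succ k ih =>
    rw [show 4 + (k + 1) * 2 = 4 + k * 2 + 1 + 1 by ring, Finset.sum_range_succ,
      Finset.sum_range_succ, ih]
    have h1 : cpQ m hm (4 + k * 2) = Equiv.refl _ := by
      rw [cpQ, if_pos (by omega)]
    have h2 : cpQ m hm (4 + k * 2 + 1) = cpB m hm := by
      rw [cpQ, if_neg (by omega), if_neg (by omega)]
    rw [h1, h2]; push_cast; ring

lemma tiebreak_singleton {m : ℕ} [NeZero m] (τ : Pref m) (w : Fin m) :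
    tiebreak τ {w} = w := by
  simp [tiebreak]

lemma copeland_eq_singleton {m N : ℕ} (P : Profile m N) (w : Fin m)
    (h : ∀ c, c ≠ w → copelandScore P c < copelandScore P w) :
    copeland m N P = {w} := by
  ext c
  simp only [copeland, Finset.mem_filter, Finset.mem_univ, true_and, Finset.mem_singleton]
  constructor
  · intro hc
    by_contra hne
    exact absurd (hc w) (not_le.mpr (h c hne))
  · rintro rfl c'
    by_cases hne : c' = c
    · rw [hne]
    · exact (h c' hne).le

lemma score_lower {m N : ℕ} (P : Profile m N) (w : Fin m) (T : Finset (Fin m))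
    (h : ∀ d ∈ T, d ≠ w ∧ 0 < margin P w d) : (T.card : ℚ) ≤ copelandScore P w := by
  have h1 : T.card ≤ ((Finset.univ.erase w).filter (fun d => 0 < margin P w d)).card := by
    apply Finset.card_le_card
    intro d hd
    simpa using h d hd
  have h2 : (T.card : ℚ) ≤
      (((Finset.univ.erase w).filter (fun d => 0 < margin P w d)).card : ℚ) := by
    exact_mod_cast h1
  unfold copelandScore
  have : (0:ℚ) ≤ (((Finset.univ.erase w).filter (fun d => margin P w d = 0)).card : ℚ) / 2 := by
    positivity
  linarith

lemma score_upper {m N : ℕ} (P : Profile m N) (w : Fin m) (A B : Finset (Fin m))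
    (hA : ∀ d, d ≠ w → 0 < margin P w d → d ∈ A)
    (hB : ∀ d, d ≠ w → margin P w d = 0 → d ∈ B) :
    copelandScore P w ≤ A.card + (B.card : ℚ) / 2 := by
  have h1 : ((Finset.univ.erase w).filter (fun d => 0 < margin P w d)).card ≤ A.card := by
    apply Finset.card_le_card
    intro d hd
    simp at hd
    exact hA d hd.1 hd.2
  have h2 : ((Finset.univ.erase w).filter (fun d => margin P w d = 0)).card ≤ B.card := by
    apply Finset.card_le_card
    intro d hd
    simp at hd
    exact hB d hd.1 hd.2
  have h1' : (((Finset.univ.erase w).filter (fun d => 0 < margin P w d)).card : ℚ) ≤ A.card := by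
    exact_mod_cast h1
  have h2' : (((Finset.univ.erase w).filter (fun d => margin P w d = 0)).card : ℚ) ≤ B.card := by
    exact_mod_cast h2
  unfold copelandScore
  linarith

lemma cpS_refl {m : ℕ} (c d : Fin m) : cpS (Equiv.refl _) c d =
    (if c.1 < d.1 then 1 else 0) - (if d.1 < c.1 then 1 else 0) := rfl

lemma cpS_cpA {m : ℕ} (hm : 5 ≤ m) (c d : Fin m) : cpS (cpA m hm) c d =
    (if (if c.1 = 0 then m - 1 else if c.1 = 1 then 0 else m - c.1) <
      (if d.1 = 0 then m - 1 else if d.1 = 1 then 0 else m - d.1) then 1 else 0) -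
    (if (if d.1 = 0 then m - 1 else if d.1 = 1 then 0 else m - d.1) <
      (if c.1 = 0 then m - 1 else if c.1 = 1 then 0 else m - c.1) then 1 else 0) := rfl

lemma cpS_cpB {m : ℕ} (hm : 5 ≤ m) (c d : Fin m) : cpS (cpB m hm) c d =
    (if (if c.1 = 0 then m - 2 else if c.1 = 1 then m - 1 else m - 1 - c.1) <
      (if d.1 = 0 then m - 2 else if d.1 = 1 then m - 1 else m - 1 - d.1) then 1 else 0) -
    (if (if d.1 = 0 then m - 2 else if d.1 = 1 then m - 1 else m - 1 - d.1) <
      (if c.1 = 0 then m - 2 else if c.1 = 1 then m - 1 else m - 1 - c.1) then 1 else 0) := rfl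

lemma refl_add_A {m : ℕ} (hm : 5 ≤ m) (c d : Fin m) :
    cpS (Equiv.refl _) c d + cpS (cpA m hm) c d =
      if c.1 = 1 ∧ 2 ≤ d.1 then 2 else if d.1 = 1 ∧ 2 ≤ c.1 then -2 else 0 := by
  have := c.2
  have := d.2
  rw [cpS_refl, cpS_cpA]
  split_ifs <;> omega

lemma refl_add_B {m : ℕ} (hm : 5 ≤ m) (c d : Fin m) :
    cpS (Equiv.refl _) c d + cpS (cpB m hm) c d =
      if c.1 = 0 ∧ d.1 = 1 then 2 else if d.1 = 0 ∧ c.1 = 1 then -2 else 0 := by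
  have := c.2
  have := d.2
  rw [cpS_refl, cpS_cpB]
  split_ifs <;> omega

lemma margin_cpQ' (m : ℕ) (hm : 5 ≤ m) (k : ℕ) (c d : Fin m) :
    margin (fun j : Fin (4 + k * 2) => cpQ m hm j) c d =
      (if c.1 = 1 ∧ 2 ≤ d.1 then 2 else if d.1 = 1 ∧ 2 ≤ c.1 then -2 else 0)
        + (k + 1) * (if c.1 = 0 ∧ d.1 = 1 then 2 else if d.1 = 0 ∧ c.1 = 1 then -2 else 0) := by
  rw [margin_cpQ, refl_add_A, refl_add_B]

lemma card_pair_compl {m : ℕ} (a b : Fin m) (h : a ≠ b) :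
    ((({a, b} : Finset (Fin m))ᶜ).card : ℚ) = m - 2 := by
  have h1 := Finset.card_add_card_compl ({a, b} : Finset (Fin m))
  rw [Finset.card_pair h, Fintype.card_fin] at h1
  have : (m : ℚ) = 2 + ((({a, b} : Finset (Fin m))ᶜ).card : ℚ) := by exact_mod_cast h1.symm
  linarith

lemma truth_winner_s18 (m : ℕ) (hm : 5 ≤ m) (k : ℕ) :
    copeland m _ (fun j : Fin (4 + k * 2) => cpQ m hm j) = {⟨1, by omega⟩} := by
  have hm' : (5 : ℚ) ≤ m := by exact_mod_cast hm
  apply copeland_eq_singleton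
  intro c hc
  have hc1 : c.1 ≠ 1 := fun h => hc (Fin.ext h)
  have hlow := score_lower (fun j : Fin (4 + k * 2) => cpQ m hm j) ⟨1, by omega⟩
    ({⟨0, by omega⟩, ⟨1, by omega⟩}ᶜ) (by
      intro d hd
      simp only [Finset.mem_compl, Finset.mem_insert, Finset.mem_singleton, not_or, Fin.ext_iff] at hd
      refine ⟨fun h => hd.2 (congrArg Fin.val h), ?_⟩
      rw [margin_cpQ']
      have : 2 ≤ d.1 := by omega
      simp [this, hd.1])
  rw [card_pair_compl _ _ (by simp)] at hlow
  refine lt_of_lt_of_le ?_ hlow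
  by_cases h0 : c.1 = 0
  · have hup := score_upper (fun j : Fin (4 + k * 2) => cpQ m hm j) c {⟨1, by omega⟩}
      ({c, ⟨1, by omega⟩}ᶜ) (by
        intro d hd hpos
        rw [margin_cpQ'] at hpos
        simp only [Finset.mem_singleton, Fin.ext_iff]
        by_contra hne
        simp [h0, hne] at hpos) (by
        intro d hd hz
        rw [margin_cpQ'] at hz
        simp only [Finset.mem_compl, Finset.mem_insert, Finset.mem_singleton, not_or]
        refine ⟨hd, fun h => ?_⟩
        subst h
        simp [h0] at hz
        omega)
    rw [card_pair_compl _ _ hc] at hup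
    simp at hup
    linarith
  · have h2 : 2 ≤ c.1 := by omega
    have hup := score_upper (fun j : Fin (4 + k * 2) => cpQ m hm j) c ∅
      ({c, ⟨1, by omega⟩}ᶜ) (by
        intro d hd hpos
        rw [margin_cpQ'] at hpos
        simp only [h0, hc1, false_and, and_false, if_false] at hpos
        split_ifs at hpos <;> simp at hpos) (by
        intro d hd hz
        rw [margin_cpQ'] at hz
        simp only [Finset.mem_compl, Finset.mem_insert, Finset.mem_singleton, not_or]
        refine ⟨hd, fun h => ?_⟩
        subst h
        simp [h0, hc1, h2] at hz)
    rw [card_pair_compl _ _ hc] at hup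
    simp at hup
    linarith

lemma manip_winner_s18 (m : ℕ) (hm : 5 ≤ m) (P : Profile m 4)
    (h0 : P 0 = Equiv.refl _) (h1 : P 1 = cpA m hm) (h2 : P 2 = Equiv.refl _)
    (h3 : P 3 = Equiv.refl _) :
    copeland m _ P = {⟨0, by omega⟩} := by
  have hm' : (5 : ℚ) ≤ m := by exact_mod_cast hm
  have hM : ∀ c d, margin P c d = (cpS (Equiv.refl _) c d + cpS (cpA m hm) c d)
      + 2 * cpS (Equiv.refl _) c d := by
    intro c d
    rw [margin_eq_sum, Fin.sum_univ_four, h0, h1, h2, h3]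
    ring
  apply copeland_eq_singleton
  intro c hc
  have hc0 : c.1 ≠ 0 := fun h => hc (Fin.ext h)
  have hlow := score_lower P ⟨0, by omega⟩ ({⟨0, by omega⟩}ᶜ) (by
      intro d hd
      simp only [Finset.mem_compl, Finset.mem_singleton, Fin.ext_iff] at hd
      refine ⟨fun h => hd (congrArg Fin.val h), ?_⟩
      rw [hM, refl_add_A, cpS_refl]
      dsimp only
      split_ifs <;> omega)
  have e : ((({⟨0, by omega⟩} : Finset (Fin m))ᶜ).card : ℚ) = m - 1 := by
    have h1 := Finset.card_add_card_compl ({⟨0, by omega⟩} : Finset (Fin m))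
    rw [Finset.card_singleton, Fintype.card_fin] at h1
    have : (m : ℚ) = 1 + ((({⟨0, by omega⟩} : Finset (Fin m))ᶜ).card : ℚ) := by
      exact_mod_cast h1.symm
    linarith
  rw [e] at hlow
  refine lt_of_lt_of_le ?_ hlow
  have hsc : copelandScore P c ≤ (({c, ⟨0, by omega⟩} : Finset (Fin m))ᶜ).card := by
    have hneg : margin P c ⟨0, by omega⟩ < 0 := by
      rw [hM, refl_add_A, cpS_refl]
      dsimp only
      split_ifs <;> omega
    set X := (Finset.univ.erase c).filter (fun d => 0 < margin P c d) with hX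
    set Y := (Finset.univ.erase c).filter (fun d => margin P c d = 0) with hY
    have hdis : Disjoint X Y := by
      rw [Finset.disjoint_left]
      intro d hd hd'
      simp [hX] at hd
      simp [hY] at hd'
      omega
    have hle : (X ∪ Y).card ≤ (({c, ⟨0, by omega⟩} : Finset (Fin m))ᶜ).card := by
      apply Finset.card_le_card
      intro d hd
      simp only [hX, hY, Finset.mem_union, Finset.mem_filter, Finset.mem_erase, Finset.mem_univ,
        and_true] at hd
      simp only [Finset.mem_compl, Finset.mem_insert, Finset.mem_singleton, not_or]
      constructor
      · rcases hd with h | h <;> exact h.1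
      · rintro rfl
        rcases hd with h | h <;> omega
    rw [Finset.card_union_of_disjoint hdis] at hle
    have hle' : (X.card : ℚ) + Y.card ≤ (({c, ⟨0, by omega⟩} : Finset (Fin m))ᶜ).card := by
      exact_mod_cast hle
    have : (0 : ℚ) ≤ Y.card := by positivity
    have : copelandScore P c = X.card + (Y.card : ℚ) / 2 := rfl
    linarith
  rw [card_pair_compl _ _ hc] at hsc
  linarith

lemma not_kGSP (m : ℕ) [NeZero m] (hm : 5 ≤ m) (k : ℕ) : ¬ kGSP m (copeland m) k := by
  intro h
  obtain ⟨i, hi, hle⟩ := h 4 (Equiv.refl _) (fun j => cpQ m hm j) {2, 3} ⟨2, by simp⟩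
    (fun _ => Equiv.refl _)
  have hcard : ({2, 3} : Finset (Fin 4)).card = 2 := rfl
  have hsort : (({2, 3} : Finset (Fin 4)).sort (· ≤ ·)) = [2, 3] := by
    rw [Finset.sort_insert (· ≤ ·) (by simp) (by decide), Finset.sort_singleton]
  have e1 : addGroupCopies (fun j : Fin 4 => cpQ m hm j) {2, 3} k =
      (fun j : Fin (4 + k * 2) => cpQ m hm j) := by
    funext j
    unfold addGroupCopies
    split_ifs with hj
    · rfl
    · rw [hsort]
      change cpQ m hm (([2, 3] : List (Fin 4)).getD ((j.1 - 4) % 2) 0).1 = cpQ m hm j.1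
      rcases Nat.mod_two_eq_zero_or_one (j.1 - 4) with h | h
      · rw [h]
        have : j.1 % 2 = 0 := by omega
        simp [cpQ, this]
      · rw [h]
        have h1 : j.1 % 2 = 1 := by omega
        have h2 : j.1 ≠ 1 := by omega
        simp [cpQ, h1, h2]
  have e2 := truth_winner_s18 m hm k
  rw [← e1] at e2
  have e3 := manip_winner_s18 m hm
    (fun j : Fin 4 => if j ∈ ({2, 3} : Finset (Fin 4)) then Equiv.refl _ else cpQ m hm j)
    (by simp [cpQ]) (by simp [cpQ]) (by simp) (by simp)
  erw [e2, e3, tiebreak_singleton, tiebreak_singleton] at hle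
  simp only [Finset.mem_insert, Finset.mem_singleton] at hi
  rcases hi with rfl | rfl
  · simp [cpQ] at hle
  · simp [cpQ, cpB] at hle
    omega

/-- For `m ≥ 5`: Copeland's rule is not `k`-augmentation
group-strategyproof for any `k ≥ 0`; consequently its group manipulation potential
is `∞`. -/
theorem copeland_groupManipPot_infinite (m : ℕ) [NeZero m] (hm : 5 ≤ m) :
    (∀ k : ℕ, ¬ kGSP m (copeland m) k) ∧ groupManipPot m (copeland m) = ⊤ := by
  refine ⟨not_kGSP m hm, ?_⟩
  have : {k : ℕ | ∀ k' : ℕ, k ≤ k' → kGSP m (copeland m) k'} = ∅ := by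
    ext k
    simp only [Set.mem_ofPred_eq, Set.mem_empty_iff_false, iff_false]
    exact fun h => not_kGSP m hm k (h k le_rfl)
  rw [groupManipPot, this, Set.image_empty, sInf_empty]
end
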